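/- Let d ∈ D_{B̃,Ã} and suppose that α₀ ∈ B̃·d ∩ Ã. Then a ≥ 1, b ≥ 1, s₀d = ds₀, and ℓ(s₀d) = ℓ(d) + 1. -/

import Mathlib

/-!
Evaluating `β·d = α₀ = e₁` for a simple root `β` shows `β = e₁` (a root `e_{i+1} − e_i` takes
the value `1` twice, `e₁` only once), so `α₀ ∈ B̃` and `d` fixes `1`; hence `d` commutes with
`s₀`, and `a, b ≥ 1` because `α₀` lies in `Ã` and in `B̃`.

For the length, write `s₀d = x₁⋯x_k` in the generators. This element maps `1` to `−1`, so some
letter `x_j` makes the image of `1` under the suffix `x_j⋯x_k` change sign from positive to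
negative. The only generator that changes a sign is `s₀`, and only at `±1`; thus `x_j = s₀`, the
suffix `p = x_{j+1}⋯x_k` fixes `1` and therefore commutes with `s₀`, and deleting the letter
`x_j` from the word gives `s₀d·s₀ = d`. So `ℓ(d) ≤ ℓ(s₀d) − 1` (`exists_shorter`), and the
opposite inequality is immediate. As `ℓ` is an infimum over words, this also needs the fact that
`s₀, …, s_{r−1}` generate `W_r` (`mem_closure`), proved by induction on `r`.
-/


/- The hyperoctahedral group `W_r` (the Weyl group of type `B_r`), realized as the group
of permutations `w` of `{±1, …, ±r}` satisfying `(−i)w = −(iw)`.  We realize its elements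
inside `Equiv.Perm ℤ`, letting `w` act on `i` on the *right* via `i·w := w⁻¹ i` (so that
`i·(wd) = (i·w)·d` and products of group elements can be written in the same order as in
the paper). -/

namespace QQS

abbrev G : Type := Equiv.Perm ℤ

/-- The generators `s₀ = (1,−1)` and `sᵢ = (i,i+1)(−i,−i−1)`. -/
def s (i : ℕ) : G :=
  if i = 0 then Equiv.swap 1 (-1)
  else Equiv.swap (i : ℤ) ((i : ℤ) + 1) * Equiv.swap (-(i : ℤ)) (-((i : ℤ) + 1))

/-- The generating set `{s₀, s₁, …, s_{r−1}}` of `W_r`. -/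
def gens (r : ℕ) : Set G := {x | ∃ i, i < r ∧ x = s i}

/-- Membership in `W_r`: permutations of `{±1, …, ±r}` commuting with negation. -/
def inW (r : ℕ) (w : G) : Prop :=
  (∀ i : ℤ, w (-i) = -(w i)) ∧ ∀ i : ℤ, (r : ℤ) < |i| → w i = i

/-- The length `ℓ(w)` of `w ∈ W_r` with respect to the generators `s₀, …, s_{r−1}`. -/
noncomputable def len (r : ℕ) (w : G) : ℕ :=
  sInf {n | ∃ l : List G, l.length = n ∧ (∀ x ∈ l, x ∈ gens r) ∧ l.prod = w}

/-- The partial sum of the first `k` parts of a composition. -/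
def psum (l : List ℕ) (k : ℕ) : ℕ := (l.take k).sum

end QQS
namespace QQS

/- The root system of type `B_r`.  `W_r` acts on the vector space `V` with basis
`e₁, …, e_r`; we realize a vector `x = ∑ xᵢ eᵢ ∈ V` as the odd function `ℤ → ℚ` with
value `xᵢ` at `i` and `−xᵢ` at `−i`.  The (right) action of `w` on `V` determined by
`eᵢ·w = e_{i·w}` if `i·w > 0` and `eᵢ·w = −e_{−(i·w)}` if `i·w < 0` then becomes
`x·w = x ∘ w`. -/

/-- The basis vector `eᵢ`, as an odd function `ℤ → ℚ`. -/
def evec (i : ℕ) : ℤ → ℚ := fun j => if j = (i : ℤ) then 1 else if j = -(i : ℤ) then -1 else 0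

/-- The simple roots: `α₀ = e₁` and `αᵢ = e_{i+1} − eᵢ` for `i ≥ 1`. -/
def sroot : ℕ → (ℤ → ℚ)
  | 0 => evec 1
  | i + 1 => evec (i + 2) - evec (i + 1)

/-- `Δ₀ = {α₀, α₁, …, α_{r−1}}`. -/
def Delta0 (r : ℕ) : Set (ℤ → ℚ) := {x | ∃ i, i < r ∧ x = sroot i}

/-- `Δ = Δ₀ ∖ {α₀}`. -/
def DeltaS (r : ℕ) : Set (ℤ → ℚ) := Delta0 r \ {sroot 0}

/-- The right action of `w ∈ W_r` on `V`: `x·w = x ∘ w`. -/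
def rAct (w : G) (x : ℤ → ℚ) : ℤ → ℚ := fun j => x (w j)

/-- `x` is a positive root: `eᵢ`, `eᵢ + eⱼ` or `eⱼ − eᵢ` with `1 ≤ i < j ≤ r`. -/
def isPos (r : ℕ) (x : ℤ → ℚ) : Prop :=
  (∃ i, 1 ≤ i ∧ i ≤ r ∧ x = evec i) ∨
  (∃ i j, 1 ≤ i ∧ i < j ∧ j ≤ r ∧ (x = evec i + evec j ∨ x = evec j - evec i))

/-- `D_K = {d ∈ W_r : α·d is a positive root for every α ∈ K}`. -/
def DD (r : ℕ) (K : Set (ℤ → ℚ)) : Set G :=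
  {d | inW r d ∧ ∀ α ∈ K, isPos r (rAct d α)}

/-- `D_{K,L} = D_K ∩ D_L⁻¹`. -/
def DDd (r : ℕ) (K L : Set (ℤ → ℚ)) : Set G := {d | d ∈ DD r K ∧ d⁻¹ ∈ DD r L}

/-- For `M ⊆ Δ₀`, the parabolic subgroup `W_M`, generated by the reflections `s_α`
for `α ∈ M` (the reflection in the hyperplane orthogonal to `αᵢ` is `sᵢ`). -/
def Wpar (r : ℕ) (M : Set (ℤ → ℚ)) : Subgroup G :=
  Subgroup.closure {w | ∃ i, i < r ∧ sroot i ∈ M ∧ w = s i}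

/-- `D^M_{K,L} = D_K ∩ D_L⁻¹ ∩ W_M`. -/
def DDm (r : ℕ) (K L M : Set (ℤ → ℚ)) : Set G := {d | d ∈ DDd r K L ∧ d ∈ Wpar r M}

end QQS
namespace QQS

/- Fix an `a`-bicomposition `λ = (l1, l2)` and a `b`-bicomposition `μ = (m1, m2)` in
`Λ(n,r)`.  The sets of simple roots `J, I ⊆ Δ`, and `Ã, B̃, A, B ⊆ Δ₀`. -/

/-- `j` is a partial sum of the composition `l`. -/
def isPartialSum (l : List ℕ) (j : ℕ) : Prop := ∃ k, psum l k = j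

/-- `{α_{off+j} : 1 ≤ j ≤ l.sum − 1, j not a partial sum of l}`. -/
def compRoots (off : ℕ) (l : List ℕ) : Set (ℤ → ℚ) :=
  {x | ∃ j, 1 ≤ j ∧ j + 1 ≤ l.sum ∧ ¬ isPartialSum l j ∧ x = sroot (off + j)}

/-- `J = J₁ ∪ J₂ ⊆ Δ` associated to the bicomposition `(l1, l2)`. -/
def Jset (l1 l2 : List ℕ) : Set (ℤ → ℚ) := compRoots 0 l1 ∪ compRoots l1.sum l2

/-- `Ã = Δ₀ ∖ {α_a}` if `a ≠ r`, and `Ã = Δ₀` if `a = r`. -/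
def Atil (r a : ℕ) : Set (ℤ → ℚ) := if a = r then Delta0 r else Delta0 r \ {sroot a}

/-- `A = Ã ∖ {α₀}`. -/
def Aset (r a : ℕ) : Set (ℤ → ℚ) := Atil r a \ {sroot 0}

/-- An admissible triple `(d, v, u)` for `(λ, μ)`: `d ∈ D_{B̃,Ã}`,
`v ∈ D^A_{J, B·d ∩ A}` and `u ∈ D^B_{I, B ∩ J·v·d⁻¹}`. -/
def Admissible (r a b : ℕ) (l1 l2 m1 m2 : List ℕ) (d v u : G) : Prop :=
  d ∈ DDd r (Atil r b) (Atil r a) ∧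
  v ∈ DDm r (Jset l1 l2) ((rAct d '' Aset r b) ∩ Aset r a) (Aset r a) ∧
  u ∈ DDm r (Jset m1 m2) (Aset r b ∩ (rAct d⁻¹ '' (rAct v '' Jset l1 l2))) (Aset r b)

end QQS
namespace QQS

/-! ### The generators as signed permutations -/

lemma s_apply_neg (k : ℕ) (i : ℤ) : s k (-i) = -(s k i) := by
  unfold s
  split_ifs with h
  · simp only [Equiv.swap_apply_def]; grind
  · simp only [Equiv.Perm.mul_apply, Equiv.swap_apply_def]; grind

lemma s_zero_apply (i : ℤ) : s 0 i = if i = 1 then -1 else if i = -1 then 1 else i := by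
  simp [s, Equiv.swap_apply_def]

lemma s_mul_self (k : ℕ) : s k * s k = 1 := by
  ext i
  unfold s
  split_ifs with h
  · simp
  · simp only [Equiv.Perm.mul_apply, Equiv.swap_apply_def, Equiv.Perm.one_apply]; grind

lemma s_inv (k : ℕ) : (s k)⁻¹ = s k := inv_eq_of_mul_eq_one_left (s_mul_self k)

lemma s_apply_self (k : ℕ) (hk : 1 ≤ k) : s k (k : ℤ) = k + 1 := by
  unfold s
  rw [if_neg (by omega)]
  simp only [Equiv.Perm.mul_apply, Equiv.swap_apply_def]; grind

/-- Among the generators only `s₀` turns a positive number into a negative one, and only `1`. -/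
lemma s_sign (k : ℕ) (i : ℤ) (hi : 0 < i) (h : s k i < 0) : k = 0 ∧ i = 1 := by
  rcases Nat.eq_zero_or_pos k with rfl | hk
  · rw [s_zero_apply] at h; grind
  · unfold s at h
    rw [if_neg (by omega)] at h
    simp only [Equiv.Perm.mul_apply, Equiv.swap_apply_def] at h; grind

lemma inW_s (r k : ℕ) (hk : k < r) : inW r (s k) := by
  refine ⟨s_apply_neg k, fun i hi => ?_⟩
  rw [lt_abs] at hi
  unfold s
  split_ifs with h
  · simp only [Equiv.swap_apply_def]; grind
  · simp only [Equiv.Perm.mul_apply, Equiv.swap_apply_def]; grind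

lemma inW_mul {r : ℕ} {v w : G} (hv : inW r v) (hw : inW r w) : inW r (v * w) :=
  ⟨fun i => by simp [hw.1, hv.1], fun i hi => by simp [hw.2 i hi, hv.2 i hi]⟩

lemma inW_inv {r : ℕ} {w : G} (hw : inW r w) : inW r w⁻¹ := by
  refine ⟨fun i => ?_, fun i hi => ?_⟩
  · rw [Equiv.Perm.inv_eq_iff_eq, hw.1]; simp
  · rw [Equiv.Perm.inv_eq_iff_eq, hw.2 i hi]

lemma inW_of_mem_closure {r : ℕ} {w : G} (h : w ∈ Subgroup.closure (gens r)) : inW r w := by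
  induction h using Subgroup.closure_induction with
  | mem x hx => obtain ⟨k, hk, rfl⟩ := hx; exact inW_s r k hk
  | one => exact ⟨fun _ => rfl, fun _ _ => rfl⟩
  | mul x y _ _ hx hy => exact inW_mul hx hy
  | inv x _ hx => exact inW_inv hx

/-- An odd permutation fixing `1` commutes with `s₀`. -/
lemma s_zero_comm {w : G} (hw : ∀ i, w (-i) = -(w i)) (h1 : w 1 = 1) : s 0 * w = w * s 0 := by
  have h2 : w (-1) = -1 := by rw [hw, h1]
  have e1 : ∀ i, w i = 1 ↔ i = 1 := fun i =>
    ⟨fun h => w.injective (h.trans h1.symm), fun h => h ▸ h1⟩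
  have e2 : ∀ i, w i = -1 ↔ i = -1 := fun i =>
    ⟨fun h => w.injective (h.trans h2.symm), fun h => h ▸ h2⟩
  ext i
  simp only [Equiv.Perm.mul_apply, s_zero_apply, e1, e2]
  split_ifs <;> simp [*]

/-! ### Generation of the hyperoctahedral group -/

lemma exists_closure_map_pos (r t : ℕ) (j : ℕ) (hj : 1 ≤ j) (h : j + t = r) :
    ∃ p ∈ Subgroup.closure (gens r), p (j : ℤ) = r := by
  induction t generalizing j with
  | zero => exact ⟨1, one_mem _, by simp; omega⟩
  | succ t ih =>
    obtain ⟨p, hp, hpj⟩ := ih (j + 1) (by omega) (by omega)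
    refine ⟨p * s j, mul_mem hp (Subgroup.subset_closure ⟨j, by omega, rfl⟩), ?_⟩
    rw [Equiv.Perm.mul_apply, s_apply_self j hj, ← hpj]
    push_cast; rfl

/-- The group generated by `s₀, …, s_{r−1}` acts transitively on `{±1, …, ±r}`. -/
lemma exists_closure_map (r : ℕ) (m : ℤ) (h0 : m ≠ 0) (hm : |m| ≤ r) :
    ∃ p ∈ Subgroup.closure (gens r), p m = r := by
  rw [abs_le] at hm
  obtain ⟨j, rfl | rfl⟩ := m.eq_nat_or_neg
  · exact exists_closure_map_pos r (r - j) j (by omega) (by omega)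
  · obtain ⟨q, hq, hqj⟩ := exists_closure_map_pos r (r - j) j (by omega) (by omega)
    obtain ⟨p, hp, hp1⟩ := exists_closure_map_pos r (r - 1) 1 le_rfl (by omega)
    have h0 : s 0 ∈ Subgroup.closure (gens r) :=
      Subgroup.subset_closure ⟨0, by omega, rfl⟩
    refine ⟨p * s 0 * p⁻¹ * q, mul_mem (mul_mem (mul_mem hp h0) (inv_mem hp)) hq, ?_⟩
    have e : p⁻¹ (r : ℤ) = 1 := by
      rw [Equiv.Perm.inv_eq_iff_eq, ← hp1]; simp
    simp only [Equiv.Perm.mul_apply, (inW_of_mem_closure hq).1, hqj,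
      (inW_inv (inW_of_mem_closure hp)).1, e, s_zero_apply]
    simpa using hp1

lemma gens_mono (r : ℕ) : gens r ⊆ gens (r + 1) := by
  rintro _ ⟨k, hk, rfl⟩
  exact ⟨k, by omega, rfl⟩

/-- `s₀, …, s_{r−1}` generate `W_r`. -/
lemma mem_closure (r : ℕ) (w : G) (hw : inW r w) : w ∈ Subgroup.closure (gens r) := by
  induction r generalizing w with
  | zero =>
    have : w = 1 := by
      ext i
      rcases eq_or_ne i 0 with rfl | hi
      · have := hw.1 0
        simp only [neg_zero] at this
        simp only [Equiv.Perm.one_apply]; omega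
      · exact hw.2 i (by simpa using hi)
    exact this ▸ one_mem _
  | succ r ih =>
    have hz : w 0 = 0 := by
      have := hw.1 0
      simp only [neg_zero] at this
      omega
    have hne : w ((r + 1 : ℕ) : ℤ) ≠ 0 := fun h => by
      have := w.injective (h.trans hz.symm)
      omega
    have hle : |w ((r + 1 : ℕ) : ℤ)| ≤ ((r + 1 : ℕ) : ℤ) := by
      by_contra! h
      -- a point of absolute value above `r + 1` is fixed, so it is not the image of `r + 1`
      rw [w.injective (hw.2 _ h)] at h
      rw [abs_of_nonneg (by positivity)] at h
      exact lt_irrefl _ h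
    obtain ⟨p, hp, hpr⟩ := exists_closure_map (r + 1) _ hne hle
    have hpw := inW_mul (inW_of_mem_closure hp) hw
    have key : inW r (p * w) := by
      refine ⟨hpw.1, fun i hi => ?_⟩
      have hfix : (p * w) ((r + 1 : ℕ) : ℤ) = ((r + 1 : ℕ) : ℤ) := hpr
      by_cases h : ((r + 1 : ℕ) : ℤ) < |i|
      · exact hpw.2 i h
      · have hi' : |i| = ((r + 1 : ℕ) : ℤ) := by push_cast at h ⊢; omega
        rcases (abs_eq (by positivity)).1 hi' with rfl | rfl
        · exact hfix
        · rw [hpw.1, hfix]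
    have := mul_mem (inv_mem hp) (Subgroup.closure_mono (gens_mono r) (ih _ key))
    simpa using this

lemma exists_word (r : ℕ) (w : G) (hw : inW r w) :
    ∃ l : List G, (∀ x ∈ l, x ∈ gens r) ∧ l.prod = w := by
  have h := mem_closure r w hw
  rw [← Subgroup.mem_toSubmonoid, Subgroup.closure_toSubmonoid] at h
  obtain ⟨l, hl, hp⟩ := Submonoid.exists_list_of_mem_closure h
  refine ⟨l, fun x hx => ?_, hp⟩
  rcases hl x hx with h | ⟨k, hk, h⟩
  · exact h
  · exact ⟨k, hk, by rw [← s_inv, ← h, inv_inv]⟩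

/-! ### Length and deletion of letters -/

lemma len_le (r : ℕ) (l : List G) (hl : ∀ x ∈ l, x ∈ gens r) : len r l.prod ≤ l.length :=
  Nat.sInf_le ⟨l, rfl, hl, rfl⟩

lemma exists_reduced (r : ℕ) (w : G) (hw : inW r w) :
    ∃ l : List G, l.length = len r w ∧ (∀ x ∈ l, x ∈ gens r) ∧ l.prod = w := by
  obtain ⟨l, hl, hp⟩ := exists_word r w hw
  exact Nat.sInf_mem (s := {n | ∃ l : List G, l.length = n ∧ (∀ x ∈ l, x ∈ gens r) ∧ l.prod = w})
    ⟨_, l, rfl, hl, hp⟩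

/-- The exchange condition for `s₀`: if a word maps `1` to a negative number, then right
multiplication by `s₀` amounts to deleting one of its letters. -/
lemma exists_shorter (r : ℕ) (l : List G) (hl : ∀ x ∈ l, x ∈ gens r) (hneg : l.prod 1 < 0) :
    ∃ l' : List G, l'.length + 1 = l.length ∧ (∀ x ∈ l', x ∈ gens r) ∧
      l'.prod = l.prod * s 0 := by
  induction l with
  | nil => simp at hneg
  | cons x l ih =>
    have hx : x ∈ gens r := hl x (by simp)
    have hl' : ∀ y ∈ l, y ∈ gens r := fun y hy => hl y (by simp [hy])
    have hW : inW r l.prod := inW_of_mem_closure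
      (list_prod_mem fun y hy => Subgroup.subset_closure (hl' y hy))
    by_cases h : l.prod 1 < 0
    · obtain ⟨m, h1, h2, h3⟩ := ih hl' h
      refine ⟨x :: m, by simp [h1], ?_, by simp [h3, mul_assoc]⟩
      intro y hy
      rcases List.mem_cons.1 hy with rfl | hy
      exacts [hx, h2 y hy]
    · have hne : l.prod 1 ≠ 0 := fun h0 => by
        have hz : l.prod 0 = 0 := by
          have := hW.1 0
          simp only [neg_zero] at this
          omega
        exact one_ne_zero (l.prod.injective (h0.trans hz.symm))
      obtain ⟨k, -, rfl⟩ := hx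
      rw [List.prod_cons, Equiv.Perm.mul_apply] at hneg
      obtain ⟨rfl, h1⟩ := s_sign k _ (by omega) hneg
      refine ⟨l, by simp, hl', ?_⟩
      rw [List.prod_cons, mul_assoc, ← s_zero_comm hW.1 h1, ← mul_assoc, s_mul_self, one_mul]

/-! ### Simple roots -/

/-- A simple root carried to `α₀ = e₁` is `α₀` itself, and the group element fixes `1`. -/
lemma sroot_eq_zero (d : G) (i : ℕ) (h : rAct d (sroot i) = sroot 0) : i = 0 ∧ d 1 = 1 := by
  have hj : ∀ j, sroot i (d j) = evec 1 j := fun j => congrFun h j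
  have one_of : ∀ j, evec 1 j = 1 → j = 1 := by
    intro j hj
    unfold evec at hj
    split_ifs at hj with h1 h2
    · simpa using h1
    · norm_num at hj
    · norm_num at hj
  cases i with
  | zero =>
    refine ⟨rfl, one_of _ ?_⟩
    exact (hj 1).trans (by simp [evec])
  | succ i =>
    -- the root takes the value `1` both at `i + 2` and at `-(i + 1)`
    have v1 : sroot (i + 1) ((i : ℤ) + 2) = 1 := by
      simp only [sroot, evec, Pi.sub_apply]
      push_cast
      rw [if_pos rfl, if_neg (by omega), if_neg (by omega)]
      norm_num
    have v2 : sroot (i + 1) (-((i : ℤ) + 1)) = 1 := by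
      simp only [sroot, evec, Pi.sub_apply]
      push_cast
      rw [if_neg (by omega), if_neg (by omega), if_neg (by omega), if_pos rfl]
      norm_num
    have a1 := hj (d⁻¹ ((i : ℤ) + 2))
    have a2 := hj (d⁻¹ (-((i : ℤ) + 1)))
    rw [show ∀ x, d (d⁻¹ x) = x from d.apply_symm_apply] at a1 a2
    have b1 := one_of _ (a1.symm.trans v1)
    have b2 := one_of _ (a2.symm.trans v2)
    have := d⁻¹.injective (b1.trans b2.symm)
    omega

lemma one_le_of_mem_Atil {r a : ℕ} (h : sroot 0 ∈ Atil r a) : 1 ≤ a := by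
  rw [Nat.one_le_iff_ne_zero]
  rintro rfl
  unfold Atil at h
  split_ifs at h with h0
  · obtain ⟨i, hi, -⟩ := h; omega
  · exact h.2 rfl

lemma Atil_subset (r a : ℕ) : Atil r a ⊆ Delta0 r := by
  unfold Atil
  split_ifs
  exacts [le_rfl, Set.sdiff_subset]

/-- Let `d ∈ D_{B̃,Ã}` and suppose `α₀ ∈ B̃·d ∩ Ã`.  Then `a ≥ 1`,
`b ≥ 1`, `s₀d = ds₀`, and `ℓ(s₀d) = ℓ(d) + 1`. -/
theorem alpha0_mem_dist (n r a b : ℕ) (l1 l2 m1 m2 : List ℕ)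
    (hla : l1.sum = a) (hlr : l1.sum + l2.sum = r) (hln : l1.length + l2.length = n)
    (hmb : m1.sum = b) (hmr : m1.sum + m2.sum = r) (hmn : m1.length + m2.length = n)
    (d : G) (hd : d ∈ DDd r (Atil r b) (Atil r a))
    (h0 : sroot 0 ∈ (rAct d '' Atil r b) ∩ Atil r a) :
    1 ≤ a ∧ 1 ≤ b ∧ s 0 * d = d * s 0 ∧ len r (s 0 * d) = len r d + 1 := by
  obtain ⟨⟨β, hβ, hβd⟩, hA⟩ := h0
  obtain ⟨i, -, rfl⟩ := Atil_subset r b hβ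
  obtain ⟨rfl, hd1⟩ := sroot_eq_zero d i hβd
  have hW : inW r d := hd.1.1
  have hcomm := s_zero_comm hW.1 hd1
  have hr : 0 < r := by obtain ⟨k, hk, -⟩ := Atil_subset r a hA; omega
  refine ⟨one_le_of_mem_Atil hA, one_le_of_mem_Atil hβ, hcomm, le_antisymm ?_ ?_⟩
  · obtain ⟨l, hlen, hl, hp⟩ := exists_reduced r d hW
    have := len_le r (s 0 :: l) (by
      intro y hy
      rcases List.mem_cons.1 hy with rfl | hy
      exacts [⟨0, hr, rfl⟩, hl y hy])
    rwa [List.prod_cons, hp, List.length_cons, hlen] at this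
  · obtain ⟨l, hlen, hl, hp⟩ := exists_reduced r (s 0 * d) (inW_mul (inW_s r 0 hr) hW)
    obtain ⟨m, hm, hmg, hmp⟩ := exists_shorter r l hl (by
      rw [hp, Equiv.Perm.mul_apply, hd1, s_zero_apply]; norm_num)
    have := len_le r m hmg
    rw [hmp, hp, hcomm, mul_assoc, s_mul_self, mul_one] at this
    omega

end QQS
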